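/- arXiv:2506.03965 — 2 statements merged into one kernel-verified Lean document; each statement's English description precedes it below -/
import Mathlib

section
/- Let f : ℝⁿ → ℝ, c ∈ (0,1), t > 0, τ > 0, μ_min > 0, μ_max > 0, η_max ∈ [0,1), ε ∈ (0,1), σ† > 0. Fix x ∈ ℝⁿ, a vector s ∈ ℝⁿ and ŝ ∈ ℝ^ℓ such that: (a) the Armijo condition f(x + t s) ≤ f(x) + c t sᵀ ∇f(x) holds, (b) sᵀ ∇f(x) ≤ −μ_min ‖ŝ‖², (c) ‖∇f(x)‖ ≤ ((σ† + μ_max)/((1 − η_max)√(1 − ε))) ‖ŝ‖, and (d) ‖∇f(x)‖ > τ. Then f(x) − f(x + t s) ≥ h(τ, t), where h(τ, t) = c t μ_min (1 − η_max)² (1 − ε) τ² / (σ† + μ_max)². -/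
open Gradient RealInnerProductSpace

/-- Guaranteed decrease at a true, successful iteration before the hitting time:
under the Armijo condition (a), the descent property (b), the gradient-step bound (c),
and `‖∇f(x)‖ > τ` (d), the decrease `f(x) - f(x + t s)` is at least
`h(τ,t) = c t μ_min (1-η_max)² (1-ε) τ² / (σ† + μ_max)²`. -/
theorem true_successful_decrease {n ℓ : ℕ}
    (f : EuclideanSpace ℝ (Fin n) → ℝ)
    (c t τ μmin μmax ηmax ε σdag : ℝ)
    (hc : c ∈ Set.Ioo (0 : ℝ) 1) (ht : 0 < t) (hτ : 0 < τ)
    (hμmin : 0 < μmin) (hμmax : 0 < μmax)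
    (hηmax : 0 ≤ ηmax) (hηmax1 : ηmax < 1)
    (hε : ε ∈ Set.Ioo (0 : ℝ) 1) (hσ : 0 < σdag)
    (x s : EuclideanSpace ℝ (Fin n)) (shat : EuclideanSpace ℝ (Fin ℓ))
    (hdiff : DifferentiableAt ℝ f x)
    (ha : f (x + t • s) ≤ f x + c * t * ⟪s, ∇ f x⟫)
    (hb : ⟪s, ∇ f x⟫ ≤ -μmin * ‖shat‖ ^ 2)
    (hcc : ‖∇ f x‖ ≤ (σdag + μmax) / ((1 - ηmax) * Real.sqrt (1 - ε)) * ‖shat‖)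
    (hd : ‖∇ f x‖ > τ) :
    f x - f (x + t • s) ≥
      c * t * μmin * (1 - ηmax) ^ 2 * (1 - ε) * τ ^ 2 / (σdag + μmax) ^ 2 := by
  obtain ⟨hc0, hc1⟩ := hc
  obtain ⟨hε0, hε1⟩ := hε
  have hr : 0 < Real.sqrt (1 - ε) := Real.sqrt_pos.mpr (by linarith)
  have hr2 : Real.sqrt (1 - ε) ^ 2 = 1 - ε := Real.sq_sqrt (by linarith)
  have he : 0 < 1 - ηmax := by linarith
  have hD : 0 < σdag + μmax := by linarith
  have hE : 0 < (1 - ηmax) * Real.sqrt (1 - ε) := mul_pos he hr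
  have h1 : τ ≤ (σdag + μmax) / ((1 - ηmax) * Real.sqrt (1 - ε)) * ‖shat‖ :=
    le_trans hd.le hcc
  rw [div_mul_eq_mul_div, le_div_iff₀ hE] at h1
  have h2 := pow_le_pow_left₀ (mul_pos hτ hE).le h1 2
  have h3 : (1 - ηmax) ^ 2 * (1 - ε) * τ ^ 2 ≤ (σdag + μmax) ^ 2 * ‖shat‖ ^ 2 := by
    rw [← hr2]
    nlinarith [h2]
  have hct : 0 < c * t := mul_pos hc0 ht
  have h4 : c * t * ⟪s, ∇ f x⟫ ≤ c * t * (-μmin * ‖shat‖ ^ 2) :=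
    mul_le_mul_of_nonneg_left hb hct.le
  have h5 := mul_le_mul_of_nonneg_left h3 (mul_pos hct hμmin).le
  have h6 : c * t * μmin * (1 - ηmax) ^ 2 * (1 - ε) * τ ^ 2 / (σdag + μmax) ^ 2
      ≤ c * t * μmin * ‖shat‖ ^ 2 := by
    rw [div_le_iff₀ (by positivity)]
    linarith
  linarith
end

section
/- Let B_ζ ⊆ ℝⁿ be a closed ball, F : ℝⁿ → ℝ^m continuously differentiable with Jacobian J, f(x) = ½‖F(x)‖², ∇f = Jᵀ F L-Lipschitz, Ω* = {z : ∇f(z) = 0}. Assume on B_ζ: ‖J(x) − J(y)‖ ≤ L₀‖x − y‖, ‖J(x)‖ ≤ J_max, an error bound ω dist(x, Ω*) ≤ ‖∇f(x)‖ with ω > 0, and ‖J(x)ᵀ F(z)‖ ≤ σ ‖x − z‖^{1+β} for every x ∈ B_ζ and z ∈ B_ζ ∩ Ω*, where σ > 0, β ∈ [0,1]. Let x, x + s ∈ B_ζ with ‖s‖ ≤ c₁ dist(x, Ω*), ∇f(x) ≠ 0, and set θ* = ‖∇f(x) + J(x)ᵀ J(x) s‖ / ‖∇f(x)‖. Suppose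 also that dist(x, Ω*) is attained at some z ∈ B_ζ ∩ Ω* and x + s stays within distance allowing z as comparison point. Then ω · dist(x + s, Ω*) ≤ L₃ dist(x, Ω*)^{1+β} + L₄ dist(x, Ω*)² + θ* L dist(x, Ω*), where L₃ = σ(1 + (1 + c₁)^{1+β}) and L₄ = (L₀ J_max / 2) c₁² + L₀ J_max (1 + c₁)(2 + c₁). -/
open Gradient ContinuousLinearMap

lemma taylor_aux {E G : Type*} [NormedAddCommGroup E] [NormedSpace ℝ E]
    [NormedAddCommGroup G] [NormedSpace ℝ G] (F : E → G) (hF : Differentiable ℝ F)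
    (x s : E) (K : ℝ)
    (h : ∀ t ∈ Set.Icc (0:ℝ) 1, ‖fderiv ℝ F (x + t • s) - fderiv ℝ F x‖ ≤ K * (t * ‖s‖)) :
    ‖F (x + s) - F x - fderiv ℝ F x s‖ ≤ K / 2 * ‖s‖ ^ 2 := by
  have hd : ∀ t : ℝ, HasDerivAt (fun t : ℝ => F (x + t • s) - F x - t • fderiv ℝ F x s)
      (fderiv ℝ F (x + t • s) s - fderiv ℝ F x s) t := by
    intro t
    have h1 : HasDerivAt (fun t : ℝ => x + t • s) s t := by
      simpa using ((hasDerivAt_id t).smul_const s).const_add x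
    have h2 := (hF (x + t • s)).hasFDerivAt.comp_hasDerivAt t h1
    have h3 : HasDerivAt (fun t : ℝ => t • fderiv ℝ F x s) (fderiv ℝ F x s) t := by
      simpa using (hasDerivAt_id t).smul_const (fderiv ℝ F x s)
    exact (h2.sub_const (F x)).sub h3
  have hB : ∀ t : ℝ, HasDerivAt (fun t : ℝ => K / 2 * ‖s‖ ^ 2 * t ^ 2) (K * (t * ‖s‖) * ‖s‖) t := by
    intro t
    have := ((hasDerivAt_id t).pow 2).const_mul (K / 2 * ‖s‖ ^ 2)
    refine this.congr_deriv ?_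
    simp only [id]
    push_cast
    ring
  have := image_norm_le_of_norm_deriv_right_le_deriv_boundary
    (f := fun t : ℝ => F (x + t • s) - F x - t • fderiv ℝ F x s) (a := 0) (b := 1)
    (B := fun t : ℝ => K / 2 * ‖s‖ ^ 2 * t ^ 2)
    (fun t _ => (hd t).continuousAt.continuousWithinAt)
    (fun t _ => (hd t).hasDerivWithinAt) (by simp)
    hB
    (fun t ht => by
      rw [← ContinuousLinearMap.sub_apply]
      exact (ContinuousLinearMap.le_opNorm _ _).trans
        (mul_le_mul_of_nonneg_right (h t ⟨ht.1, ht.2.le⟩) (norm_nonneg _)))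
    (Set.right_mem_Icc.2 zero_le_one)
  simpa using this

lemma gradient_aux {n m : ℕ}
    (F : EuclideanSpace ℝ (Fin n) → EuclideanSpace ℝ (Fin m)) (hF : Differentiable ℝ F)
    (y : EuclideanSpace ℝ (Fin n)) :
    ∇ (fun y => (1 / 2 : ℝ) * ‖F y‖ ^ 2) y = adjoint (fderiv ℝ F y) (F y) := by
  apply HasGradientAt.gradient
  rw [hasGradientAt_iff_hasFDerivAt]
  have h := ((hF y).hasFDerivAt.norm_sq).const_mul (1 / 2 : ℝ)
  refine h.congr_fderiv ?_
  refine ContinuousLinearMap.ext fun v => ?_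
  simp [ContinuousLinearMap.adjoint_inner_left]

/-- One-step decrease of the distance to the stationary set for the sketched
Levenberg–Marquardt method: under Lipschitz gradient, Lipschitz and bounded Jacobian on
the closed ball `B_ζ`, the error bound `ω dist(x,Ω*) ≤ ‖∇f(x)‖`, the residual condition
`‖J(x)ᵀF(z)‖ ≤ σ‖x-z‖^{1+β}`, a step `s` with `‖s‖ ≤ c₁ dist(x,Ω*)` and relative
Gauss–Newton residual `θ*`, one has
`ω dist(x+s,Ω*) ≤ L₃ dist(x,Ω*)^{1+β} + L₄ dist(x,Ω*)² + θ* L dist(x,Ω*)`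
with `L₃ = σ(1+(1+c₁)^{1+β})` and `L₄ = (L₀ J_max/2)c₁² + L₀ J_max (1+c₁)(2+c₁)`. -/
theorem dist_decrease_one_step {n m : ℕ}
    (x₀ : EuclideanSpace ℝ (Fin n)) (ζ : ℝ) (hζ : 0 < ζ)
    (Bζ : Set (EuclideanSpace ℝ (Fin n))) (hBζ : Bζ = Metric.closedBall x₀ ζ)
    (F : EuclideanSpace ℝ (Fin n) → EuclideanSpace ℝ (Fin m)) (hF : ContDiff ℝ 1 F)
    (f : EuclideanSpace ℝ (Fin n) → ℝ) (hf : f = fun y => (1 / 2) * ‖F y‖ ^ 2)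
    (L L₀ Jmax ω σ β c₁ : ℝ)
    (hLip : ∀ x y : EuclideanSpace ℝ (Fin n), ‖∇ f x - ∇ f y‖ ≤ L * ‖x - y‖)
    (Ωstar : Set (EuclideanSpace ℝ (Fin n))) (hΩ : Ωstar = {z | ∇ f z = 0})
    (hJLip : ∀ x ∈ Bζ, ∀ y ∈ Bζ, ‖fderiv ℝ F x - fderiv ℝ F y‖ ≤ L₀ * ‖x - y‖)
    (hJb : ∀ x ∈ Bζ, ‖fderiv ℝ F x‖ ≤ Jmax)
    (hω : 0 < ω)
    (heb : ∀ x ∈ Bζ, ω * Metric.infDist x Ωstar ≤ ‖∇ f x‖)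
    (hσ : 0 < σ) (hβ : β ∈ Set.Icc (0 : ℝ) 1)
    (hres : ∀ x ∈ Bζ, ∀ z ∈ Bζ ∩ Ωstar,
      ‖adjoint (fderiv ℝ F x) (F z)‖ ≤ σ * ‖x - z‖ ^ (1 + β))
    (x s : EuclideanSpace ℝ (Fin n)) (hx : x ∈ Bζ) (hxs : x + s ∈ Bζ)
    (hs : ‖s‖ ≤ c₁ * Metric.infDist x Ωstar)
    (hgx : ∇ f x ≠ 0)
    (θstar : ℝ)
    (hθ : θstar = ‖∇ f x + adjoint (fderiv ℝ F x) (fderiv ℝ F x s)‖ / ‖∇ f x‖)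
    (z : EuclideanSpace ℝ (Fin n)) (hz : z ∈ Bζ ∩ Ωstar)
    (hzdist : ‖x - z‖ = Metric.infDist x Ωstar) :
    ω * Metric.infDist (x + s) Ωstar ≤
      σ * (1 + (1 + c₁) ^ (1 + β)) * Metric.infDist x Ωstar ^ (1 + β)
      + (L₀ * Jmax / 2 * c₁ ^ 2 + L₀ * Jmax * (1 + c₁) * (2 + c₁)) *
          Metric.infDist x Ωstar ^ 2
      + θstar * L * Metric.infDist x Ωstar := by
  have hFd : Differentiable ℝ F := hF.differentiable (by norm_num)
  have hg : ∀ y, ∇ f y = adjoint (fderiv ℝ F y) (F y) := by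
    intro y; rw [hf]; exact gradient_aux F hFd y
  have hconv : Convex ℝ Bζ := by rw [hBζ]; exact convex_closedBall _ _
  obtain ⟨hzB, hzΩ⟩ := id hz
  have hgz : ∇ f z = 0 := by rw [hΩ] at hzΩ; exact hzΩ
  have heb' := heb _ hxs
  have hxz : x ≠ z := by rintro rfl; exact hgx hgz
  rw [← hzdist] at hs ⊢
  have hD : 0 < ‖x - z‖ := norm_pos_iff.2 (sub_ne_zero.2 hxz)
  have hc : 0 ≤ c₁ := nonneg_of_mul_nonneg_left ((norm_nonneg s).trans hs) hD
  have hL0 : 0 ≤ L₀ := nonneg_of_mul_nonneg_left ((norm_nonneg _).trans (hJLip x hx z hzB)) hD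
  have hJm : 0 ≤ Jmax := (norm_nonneg _).trans (hJb x hx)
  set D := ‖x - z‖ with hDdef
  set J := fderiv ℝ F x with hJ
  set J' := fderiv ℝ F (x + s) with hJ'
  set r := F (x + s) - F x - J s with hr
  have hxsz : ‖x + s - z‖ ≤ (1 + c₁) * D := by
    have : x + s - z = (x - z) + s := by abel
    rw [this]
    exact (norm_add_le _ _).trans (by linarith)
  have hJJ : ‖J' - J‖ ≤ L₀ * (c₁ * D) := by
    have := hJLip _ hxs _ hx
    rw [add_sub_cancel_left] at this
    exact this.trans (mul_le_mul_of_nonneg_left hs hL0)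
  have hrb : ‖r‖ ≤ L₀ / 2 * (c₁ * D) ^ 2 := by
    have : ‖r‖ ≤ L₀ / 2 * ‖s‖ ^ 2 := by
      apply taylor_aux F hFd x s L₀
      intro t ht
      have := hJLip _ (hconv.add_smul_mem hx hxs ht) _ hx
      rwa [add_sub_cancel_left, norm_smul, Real.norm_of_nonneg ht.1] at this
    refine this.trans ?_
    gcongr
  have hFF : ‖F (x + s) - F z‖ ≤ Jmax * ((1 + c₁) * D) :=
    (hconv.norm_image_sub_le_of_norm_fderiv_le (fun y _ => hFd y) hJb hzB hxs).trans
      (mul_le_mul_of_nonneg_left hxsz hJm)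
  have hadj : ∀ (A : EuclideanSpace ℝ (Fin n) →L[ℝ] EuclideanSpace ℝ (Fin m)) v,
      ‖adjoint A v‖ ≤ ‖A‖ * ‖v‖ := by
    intro A v
    have := (adjoint A).le_opNorm v
    rwa [LinearIsometryEquiv.norm_map] at this
  have key : ∇ f (x + s) = (∇ f x + adjoint J (J s)) + adjoint J r
      + adjoint (J' - J) (F (x + s) - F z) + (adjoint J' (F z) - adjoint J (F z)) := by
    rw [hg, hg, hr, map_sub adjoint J' J]
    simp only [map_sub, ContinuousLinearMap.sub_apply]
    abel
  have b1 : ‖∇ f x + adjoint J (J s)‖ ≤ θstar * L * D := by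
    have h0 : 0 < ‖∇ f x‖ := norm_pos_iff.2 hgx
    have h1 : ‖∇ f x + adjoint J (J s)‖ = θstar * ‖∇ f x‖ := by
      rw [hθ]; field_simp
    have h2 : 0 ≤ θstar := by rw [hθ]; positivity
    have h3 := hLip x z
    rw [hgz, sub_zero] at h3
    rw [h1, mul_assoc]
    exact mul_le_mul_of_nonneg_left h3 h2
  have b2 : ‖adjoint J r‖ ≤ Jmax * (L₀ / 2 * (c₁ * D) ^ 2) :=
    (hadj _ _).trans (mul_le_mul (hJb x hx) hrb (norm_nonneg _) hJm)
  have b3 : ‖adjoint (J' - J) (F (x + s) - F z)‖ ≤ L₀ * (c₁ * D) * (Jmax * ((1 + c₁) * D)) :=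
    (hadj _ _).trans (mul_le_mul hJJ hFF (norm_nonneg _) (by positivity))
  have b4 : ‖adjoint J' (F z)‖ ≤ σ * ((1 + c₁) ^ (1 + β) * D ^ (1 + β)) := by
    refine (hres _ hxs z hz).trans (mul_le_mul_of_nonneg_left ?_ hσ.le)
    rw [← Real.mul_rpow (by positivity) hD.le]
    exact Real.rpow_le_rpow (norm_nonneg _) hxsz (by linarith [hβ.1])
  have b5 : ‖adjoint J (F z)‖ ≤ σ * D ^ (1 + β) := hres x hx z hz
  have tri : ‖∇ f (x + s)‖ ≤ ‖∇ f x + adjoint J (J s)‖ + ‖adjoint J r‖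
      + ‖adjoint (J' - J) (F (x + s) - F z)‖ + (‖adjoint J' (F z)‖ + ‖adjoint J (F z)‖) := by
    rw [key]
    refine (norm_add_le _ _).trans (add_le_add (norm_add₃_le) (norm_sub_le _ _))
  have hpos : 0 ≤ L₀ * Jmax * (1 + c₁) * 2 * D ^ 2 := by positivity
  have e : σ * (1 + (1 + c₁) ^ (1 + β)) * D ^ (1 + β)
      = σ * ((1 + c₁) ^ (1 + β) * D ^ (1 + β)) + σ * D ^ (1 + β) := by ring
  rw [e]
  have e2 : (L₀ * Jmax / 2 * c₁ ^ 2 + L₀ * Jmax * (1 + c₁) * (2 + c₁)) * D ^ 2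
      = Jmax * (L₀ / 2 * (c₁ * D) ^ 2) + L₀ * (c₁ * D) * (Jmax * ((1 + c₁) * D))
        + L₀ * Jmax * (1 + c₁) * 2 * D ^ 2 := by ring
  rw [e2]
  linarith
end
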